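/- arXiv:1711.05452 — 3 statements merged into one kernel-verified Lean document; each statement's English description precedes it below -/
import Mathlib

section
/- Let (K, φ) be a topological dynamical system and let q : K → L be a projection onto its maximal trivial factor. Then the Koopman operator T_φ is mean ergodic on C(K) if and only if for every l ∈ L the fiber system (K_l, φ_l) is uniquely ergodic. -/
open MeasureTheory Filter

/-- The Koopman operator of `φ` is mean ergodic on `C(K)`: for every continuous function
`f`, the Cesàro averages `A_n f = (1/n) ∑_{k<n} f ∘ φ^k` converge in the sup norm
(i.e. uniformly) to some function. -/
def MeanErgodic {K : Type*} [TopologicalSpace K] (φ : K → K) : Prop :=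
  ∀ f : C(K, ℂ), ∃ g : K → ℂ,
    TendstoUniformly (fun (n : ℕ) (x : K) => (n : ℂ)⁻¹ • ∑ k ∈ Finset.range n, f (φ^[k] x))
      g atTop

/-- A topological dynamical system is uniquely ergodic if it admits exactly one invariant
regular Borel probability measure. -/
def UniquelyErgodic {S : Type*} [TopologicalSpace S] (ψ : S → S) : Prop :=
  letI : MeasurableSpace S := borel S
  ∃! μ : Measure S, IsProbabilityMeasure μ ∧ μ.Regular ∧ MeasurePreserving ψ μ μ

/-- The restriction of `φ` to the fiber `q⁻¹ {l}`. -/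
def fiberMap {K L : Type*} (φ : K → K) (q : K → L) (hinv : ∀ x, q (φ x) = q x) (l : L)
    (x : ↥(q ⁻¹' {l})) : ↥(q ⁻¹' {l}) :=
  ⟨φ ↑x, by rw [Set.mem_preimage, Set.mem_singleton_iff, hinv]; exact x.2⟩

/-!
Both directions go through Birkhoff averages on a single system `(S, ψ)`. Any limit of averages
`A_{nᵢ} f (xᵢ)` with `nᵢ → ∞` is integration against an invariant measure, so `ψ` is uniquely
ergodic precisely when all Birkhoff averages converge to constants, and then they converge
uniformly.

If `T_φ` is mean ergodic, the limit of `A_n f` is continuous and invariant, hence factors through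
`q` and is constant on each fiber. Conversely, assume that `A_n f` is uniformly close to `c` on the
fiber over `l` for one `n`. As `q` is a closed map, this persists on `q⁻¹(V)` for a neighbourhood
`V` of `l`. Since `q⁻¹(V)` is `φ`-invariant and `A_m A_n f - A_m f → 0` uniformly as `m → ∞`, all
later averages are close to `c` on `q⁻¹(V)` as well, and compactness of `K` concludes.
-/

open Function Set
open scoped Topology

section BirkhoffAverage

variable {X Y E : Type*} {φ : X → X} {n : ℕ} {x : X}

theorem birkhoffAverage_comm {R M : Type*} [Semifield R] [AddCommMonoid M] [Module R M]
    (φ : X → X) (f : X → M) (m n : ℕ) :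
    birkhoffAverage R φ (birkhoffAverage R φ f n) m =
      birkhoffAverage R φ (birkhoffAverage R φ f m) n := by
  ext x
  simp only [birkhoffAverage, birkhoffSum, ← Finset.smul_sum, ← iterate_add_apply]
  rw [smul_comm, Finset.sum_comm]
  simp only [add_comm]

theorem birkhoffAverage_comp_of_semiconj (R : Type*) {M : Type*} [DivisionSemiring R]
    [AddCommMonoid M] [Module R M] {ψ : Y → Y} {i : Y → X} (h : Semiconj i ψ φ) (f : X → M)
    (n : ℕ) (y : Y) :
    birkhoffAverage R ψ (f ∘ i) n y = birkhoffAverage R φ f n (i y) := by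
  simp only [birkhoffAverage, birkhoffSum, comp_apply, (h.iterate_right _).eq]

theorem birkhoffAverage_mem_of_convex {R : Type*} [Field R] [LinearOrder R]
    [IsStrictOrderedRing R] [AddCommGroup E] [Module R E] {s : Set E} (hs : Convex R s)
    {f : X → E} (hn : n ≠ 0) (h : ∀ k < n, f (φ^[k] x) ∈ s) :
    birkhoffAverage R φ f n x ∈ s := by
  rw [birkhoffAverage, birkhoffSum, Finset.smul_sum]
  refine hs.sum_mem (fun _ _ => by positivity) ?_ fun k hk => h k (Finset.mem_range.1 hk)
  simp [hn]

theorem continuous_birkhoffAverage {R M : Type*} [DivisionSemiring R] [AddCommMonoid M] [Module R M]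
    [TopologicalSpace X] [TopologicalSpace M] [ContinuousAdd M] [ContinuousConstSMul R M]
    (hφ : Continuous φ) {f : X → M} (hf : Continuous f) (n : ℕ) :
    Continuous (birkhoffAverage R φ f n) :=
  (continuous_finsetSum _ fun k _ => hf.comp (hφ.iterate k)).const_smul _

variable [NormedAddCommGroup E] [NormedSpace ℝ E] {f : X → E} {C : ℝ}

theorem dist_birkhoffAverage_iterate_le (hC : ∀ x y, dist (f x) (f y) ≤ C) (k : ℕ) :
    dist (birkhoffAverage ℝ φ f n x) (birkhoffAverage ℝ φ f n (φ^[k] x)) ≤ k * (C / n) := by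
  have hstep {j : ℕ} : dist (birkhoffAverage ℝ φ f n (φ^[j] x))
      (birkhoffAverage ℝ φ f n (φ^[j + 1] x)) ≤ C / n := by
    rw [iterate_succ_apply', dist_comm, dist_birkhoffAverage_apply_birkhoffAverage]
    gcongr
    exact hC _ _
  simpa using dist_le_range_sum_of_dist_le (f := fun j => birkhoffAverage ℝ φ f n (φ^[j] x)) k
    fun _ => hstep

theorem dist_birkhoffAverage_birkhoffAverage_self_le (hC : ∀ x y, dist (f x) (f y) ≤ C)
    {m : ℕ} (hn : n ≠ 0) :
    dist (birkhoffAverage ℝ φ (birkhoffAverage ℝ φ f n) m x) (birkhoffAverage ℝ φ f m x) ≤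
      n * (C / m) := by
  have hC₀ : 0 ≤ C := dist_nonneg.trans (hC x x)
  rw [birkhoffAverage_comm, ← Metric.mem_closedBall]
  refine birkhoffAverage_mem_of_convex (convex_closedBall _ _) hn fun k hk => ?_
  rw [Metric.mem_closedBall']
  refine (dist_birkhoffAverage_iterate_le hC k).trans ?_
  gcongr

theorem eventually_forall_dist_birkhoffAverage_lt (hf : Bornology.IsBounded (range f))
    {s : Set X} (hs : MapsTo φ s s) {c : E} {δ ε : ℝ} (hδε : δ < ε) (hn : n ≠ 0)
    (h : ∀ y ∈ s, dist (birkhoffAverage ℝ φ f n y) c ≤ δ) :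
    ∀ᶠ m in atTop, ∀ y ∈ s, dist (birkhoffAverage ℝ φ f m y) c < ε := by
  obtain ⟨C, hC⟩ := Metric.isBounded_range_iff.1 hf
  have hlim : Tendsto (fun m : ℕ => n * (C / m)) atTop (𝓝 0) := by
    simpa using (tendsto_const_div_atTop_nhds_zero_nat C).const_mul (n : ℝ)
  filter_upwards [hlim.eventually_lt_const (sub_pos.2 hδε), eventually_ne_atTop 0]
    with m hm hm₀ y hy
  have hmem : birkhoffAverage ℝ φ (birkhoffAverage ℝ φ f n) m y ∈ Metric.closedBall c δ :=
    birkhoffAverage_mem_of_convex (convex_closedBall c δ) hm₀ fun k _ => h _ (hs.iterate k hy)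
  calc dist (birkhoffAverage ℝ φ f m y) c
      ≤ dist (birkhoffAverage ℝ φ (birkhoffAverage ℝ φ f n) m y) (birkhoffAverage ℝ φ f m y) +
        dist (birkhoffAverage ℝ φ (birkhoffAverage ℝ φ f n) m y) c := dist_triangle_left _ _ _
    _ ≤ n * (C / m) + δ :=
      add_le_add (dist_birkhoffAverage_birkhoffAverage_self_le hC hn) hmem
    _ < ε := by linarith

theorem tendsto_birkhoffAverage_apply_sub {ι : Type*} {F : Filter ι} {N : ι → ℕ}
    (hf : Bornology.IsBounded (range f)) (hN : Tendsto N F atTop) (x : ι → X) :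
    Tendsto (fun i => birkhoffAverage ℝ φ f (N i) (φ (x i)) - birkhoffAverage ℝ φ f (N i) (x i))
      F (𝓝 0) := by
  obtain ⟨C, hC⟩ := Metric.isBounded_range_iff.1 hf
  refine squeeze_zero_norm (fun i => ?_) ((tendsto_const_div_atTop_nhds_zero_nat C).comp hN)
  rw [← dist_eq_norm, dist_comm]
  simpa using dist_birkhoffAverage_iterate_le hC 1

theorem exists_tendsto_birkhoffAverage_ultrafilter [CompleteSpace E] {ι : Type*} {U : Ultrafilter ι}
    {N : ι → ℕ} (hN : Tendsto N U atTop) (φ : X → X) (x : ι → X)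
    (hf : TotallyBounded (range f)) :
    ∃ a, Tendsto (fun i => birkhoffAverage ℝ φ f (N i) (x i)) U (𝓝 a) := by
  have hcompact : IsCompact (closure (convexHull ℝ (range f))) :=
    hf.convexHull.closure.isCompact_of_isClosed isClosed_closure
  have hmem : ∀ᶠ i in (U : Filter ι),
      birkhoffAverage ℝ φ f (N i) (x i) ∈ closure (convexHull ℝ (range f)) := by
    filter_upwards [hN.eventually_ne_atTop 0] with i hi
    exact subset_closure <| birkhoffAverage_mem_of_convex (convex_convexHull ℝ _) hi fun k _ =>
      subset_convexHull ℝ _ (mem_range_self _)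
  obtain ⟨a, -, ha⟩ := hcompact.ultrafilter_le_nhds' (U.map _) hmem
  exact ⟨a, ha⟩

theorem tendstoUniformly_birkhoffAverage_of_fibers {L : Type*} [TopologicalSpace X]
    [CompactSpace X] [TopologicalSpace L] [T2Space L] (hφ : Continuous φ) (f : C(X, E))
    {q : X → L} (hq : Continuous q) (hinv : ∀ x, q (φ x) = q x) {c : L → E}
    (h : ∀ l, TendstoUniformlyOn (birkhoffAverage ℝ φ f) (fun _ => c l) atTop (q ⁻¹' {l})) :
    TendstoUniformly (birkhoffAverage ℝ φ f) (c ∘ q) atTop := by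
  rw [← tendstoLocallyUniformly_iff_tendstoUniformly_of_compactSpace,
    Metric.tendstoLocallyUniformly_iff]
  intro ε hε x
  obtain ⟨n, hn, hn₀⟩ := ((Metric.tendstoUniformlyOn_iff.1 (h (q x)) (ε / 4) (by positivity)).and
    (eventually_ne_atTop 0)).exists
  have hV : ∀ᶠ l in 𝓝 (q x), ∀ y ∈ q ⁻¹' {l},
      dist (c (q x)) (birkhoffAverage ℝ φ f n y) < ε / 4 :=
    hq.isClosedMap.eventually_nhds_fiber (q x) fun y hy =>
      (continuous_const.dist
        (continuous_birkhoffAverage hφ f.continuous n)).continuousAt.eventually_lt_const (hn y hy)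
  obtain ⟨V, hVq, hV⟩ := eventually_iff_exists_mem.1 hV
  have hmaps : MapsTo φ (q ⁻¹' V) (q ⁻¹' V) := fun y hy => by simpa [hinv] using hy
  have hclose : ∀ᶠ m in atTop, ∀ y ∈ q ⁻¹' V,
      dist (birkhoffAverage ℝ φ f m y) (c (q x)) < ε / 2 :=
    eventually_forall_dist_birkhoffAverage_lt (isCompact_range f.continuous).isBounded hmaps
      (by linarith : ε / 4 < ε / 2) hn₀ fun y hy => (dist_comm _ _).trans_le (hV _ hy y rfl).le
  have hlim (y : X) (hy : y ∈ q ⁻¹' V) : dist (c (q y)) (c (q x)) ≤ ε / 2 :=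
    le_of_tendsto (((h (q y)).tendsto_at rfl).dist tendsto_const_nhds)
      (hclose.mono fun m hm => (hm y hy).le)
  refine ⟨q ⁻¹' V, hq.continuousAt hVq, hclose.mono fun m hm y hy => ?_⟩
  calc dist (c (q y)) (birkhoffAverage ℝ φ f m y)
      ≤ dist (c (q y)) (c (q x)) + dist (birkhoffAverage ℝ φ f m y) (c (q x)) :=
        dist_triangle_right _ _ _
    _ < ε / 2 + ε / 2 := add_lt_add_of_le_of_lt (hlim y hy) (hm y hy)
    _ = ε := add_halves ε

end BirkhoffAverage

section InvariantMeasure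

theorem integral_birkhoffAverage {α E : Type*} [MeasurableSpace α] [NormedAddCommGroup E]
    [NormedSpace ℝ E] {ψ : α → α} {μ : Measure α} (hψ : MeasurePreserving ψ μ μ) {f : α → E}
    (hf : Integrable f μ) {n : ℕ} (hn : n ≠ 0) :
    ∫ x, birkhoffAverage ℝ ψ f n x ∂μ = ∫ x, f x ∂μ := by
  have hiterate (k : ℕ) : ∫ x, f (ψ^[k] x) ∂μ = ∫ x, f x ∂μ := by
    have hk := hψ.iterate k
    rw [← integral_map hk.aemeasurable (hk.map_eq.symm ▸ hf.aestronglyMeasurable), hk.map_eq]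
  have hint (k : ℕ) : Integrable (fun x => f (ψ^[k] x)) μ :=
    (hψ.iterate k).integrable_comp_of_integrable hf
  simp only [birkhoffAverage, birkhoffSum]
  rw [integral_smul, integral_finsetSum _ fun k _ => hint k]
  simp [hiterate, ← Nat.cast_smul_eq_nsmul ℝ, smul_smul, hn]

variable {S E : Type*} [TopologicalSpace S]

/-- An invariant regular probability measure, the object whose uniqueness `UniquelyErgodic`
expresses; any measurable structure on `S` is allowed here, so that it may be a `BorelSpace`
instance. -/
def IsInvariantProbability [MeasurableSpace S] (ψ : S → S) (μ : Measure S) : Prop :=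
  IsProbabilityMeasure μ ∧ μ.Regular ∧ MeasurePreserving ψ μ μ

/-- The state `f ↦ (1/n) ∑_{k<n} f (ψ^k x)` on `C(S)`; for `n = 0` it is the zero functional. -/
noncomputable def birkhoffFunctional (ψ : S → S) (n : ℕ) (x : S) : C(S, ℝ) →ₚ[ℝ] ℝ where
  toFun f := birkhoffAverage ℝ ψ f n x
  map_add' f g := by rw [ContinuousMap.coe_add, birkhoffAverage_add]; rfl
  map_smul' c f := by
    simp only [birkhoffAverage, birkhoffSum, ContinuousMap.smul_apply, ← Finset.smul_sum,
      RingHom.id_apply, smul_comm c]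
  monotone' f g hfg := by
    refine smul_le_smul_of_nonneg_left (Finset.sum_le_sum fun k _ => ?_) (by positivity)
    exact hfg (ψ^[k] x)

theorem exists_positiveLinearMap_tendsto {ι V : Type*} [AddCommGroup V] [PartialOrder V]
    [Module ℝ V] {F : Filter ι} [F.NeBot] {Λ : ι → V →ₚ[ℝ] ℝ}
    (h : ∀ v, ∃ a, Tendsto (fun i => Λ i v) F (𝓝 a)) :
    ∃ Λ' : V →ₚ[ℝ] ℝ, ∀ v, Tendsto (fun i => Λ i v) F (𝓝 (Λ' v)) := by
  choose a ha using h
  let Λ' : V →ₚ[ℝ] ℝ :=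
    { toFun := a
      map_add' := fun v w =>
        tendsto_nhds_unique (ha (v + w)) (by simpa using (ha v).add (ha w))
      map_smul' := fun c v =>
        tendsto_nhds_unique (ha (c • v)) (by simpa using (ha v).const_mul c)
      monotone' := fun v w hvw =>
        le_of_tendsto_of_tendsto' (ha v) (ha w) fun i => OrderHomClass.mono (Λ i) hvw }
  exact ⟨Λ', ha⟩

variable [CompactSpace S] [MeasurableSpace S] [BorelSpace S]

theorem integrable_of_compactSpace [NormedAddCommGroup E] (f : C(S, E)) (μ : Measure S)
    [IsFiniteMeasure μ] : Integrable f μ :=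
  f.continuous.integrable_of_hasCompactSupport (HasCompactSupport.of_compactSpace f)

theorem tendsto_birkhoffAverage_integral_of_real [NormedAddCommGroup E] [NormedSpace ℝ E]
    [CompleteSpace E] {ψ : S → S} {μ : Measure S} [IsFiniteMeasure μ] {ι : Type*}
    {U : Ultrafilter ι} {n : ι → ℕ} (hn : Tendsto n U atTop) {x : ι → S}
    (h : ∀ f : C(S, ℝ),
      Tendsto (fun i => birkhoffAverage ℝ ψ f (n i) (x i)) U (𝓝 (∫ y, f y ∂μ)))
    (f : C(S, E)) :
    Tendsto (fun i => birkhoffAverage ℝ ψ f (n i) (x i)) U (𝓝 (∫ y, f y ∂μ)) := by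
  obtain ⟨a, ha⟩ := exists_tendsto_birkhoffAverage_ultrafilter hn ψ x
    (isCompact_range f.continuous).totallyBounded
  suffices a = ∫ y, f y ∂μ from this ▸ ha
  refine (SeparatingDual.eq_iff_forall_dual_eq (R := ℝ)).2 fun ℓ => ?_
  rw [← ℓ.integral_comp_comm (integrable_of_compactSpace f μ)]
  refine tendsto_nhds_unique ((ℓ.continuous.tendsto a).comp ha) ?_
  exact (h ((ℓ : C(E, ℝ)).comp f)).congr fun i =>
    (map_birkhoffAverage ℝ ℝ ℓ ψ f (n i) (x i)).symm

theorem integral_eq_integral_of_tendsto_birkhoffAverage [NormedAddCommGroup E] [NormedSpace ℝ E]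
    {ψ : S → S} (hψ : Continuous ψ) {μ : Measure S} [IsFiniteMeasure μ]
    (hμ : MeasurePreserving ψ μ μ) (f : C(S, E)) {g : S → E}
    (h : ∀ x, Tendsto (birkhoffAverage ℝ ψ f · x) atTop (𝓝 (g x))) :
    ∫ x, f x ∂μ = ∫ x, g x ∂μ := by
  have hmeas (n : ℕ) : AEStronglyMeasurable (birkhoffAverage ℝ ψ f n) μ :=
    (integrable_of_compactSpace ⟨_, continuous_birkhoffAverage hψ f.continuous n⟩ μ).1
  have hbound : ∀ᶠ n in atTop, ∀ x, ‖birkhoffAverage ℝ ψ f n x‖ ≤ ‖f‖ := by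
    filter_upwards [eventually_ne_atTop 0] with n hn x
    exact mem_closedBall_zero_iff.1 <| birkhoffAverage_mem_of_convex (convex_closedBall _ _) hn
      fun k _ => mem_closedBall_zero_iff.2 (f.norm_coe_le_norm _)
  have hlim : Tendsto (fun n => ∫ x, birkhoffAverage ℝ ψ f n x ∂μ) atTop (𝓝 (∫ x, g x ∂μ)) :=
    tendsto_integral_filter_of_norm_le_const (.of_forall hmeas)
      ⟨‖f‖, hbound.mono fun _ hn => .of_forall hn⟩ (.of_forall h)
  refine tendsto_nhds_unique (tendsto_const_nhds.congr' ?_) hlim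
  filter_upwards [eventually_ne_atTop 0] with n hn
  exact (integral_birkhoffAverage hμ (integrable_of_compactSpace f μ) hn).symm

variable [T2Space S]

theorem exists_regular_measure_integral_eq (Λ : C(S, ℝ) →ₚ[ℝ] ℝ) :
    ∃ μ : Measure S, μ.Regular ∧ ∀ f : C(S, ℝ), ∫ x, f x ∂μ = Λ f := by
  let Λc : CompactlySupportedContinuousMap S ℝ →ₚ[ℝ] ℝ :=
    { toFun := fun f => Λ f.toContinuousMap
      map_add' := fun f g => map_add Λ f.toContinuousMap g.toContinuousMap
      map_smul' := fun c f => map_smul Λ c f.toContinuousMap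
      monotone' := fun _ _ hfg => OrderHomClass.mono Λ hfg }
  exact ⟨RealRMK.rieszMeasure Λc, inferInstance, fun f =>
    RealRMK.integral_rieszMeasure Λc (CompactlySupportedContinuousMap.continuousMapEquiv f)⟩

theorem measure_ext_of_integral_continuousMap_eq {μ ν : Measure S} [μ.Regular] [ν.Regular]
    (h : ∀ f : C(S, ℝ), ∫ x, f x ∂μ = ∫ x, f x ∂ν) : μ = ν :=
  Measure.ext_of_integral_eq_on_compactlySupported fun f => h f.toContinuousMap

theorem measurePreserving_of_integral_comp_eq {ψ : S → S} (hψ : Continuous ψ) {μ : Measure S}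
    [μ.Regular] (h : ∀ f : C(S, ℝ), ∫ x, f (ψ x) ∂μ = ∫ x, f x ∂μ) : MeasurePreserving ψ μ μ := by
  have : (μ.map ψ).InnerRegularCompactLTTop :=
    Measure.InnerRegularCompactLTTop.map_of_continuous hψ
  refine ⟨hψ.measurable, measure_ext_of_integral_continuousMap_eq fun f => ?_⟩
  rw [integral_map hψ.aemeasurable f.continuous.aestronglyMeasurable, h]

theorem exists_isInvariantProbability_of_positiveLinearMap {ψ : S → S} (hψ : Continuous ψ)
    (Λ : C(S, ℝ) →ₚ[ℝ] ℝ) (hone : Λ 1 = 1) (hinv : ∀ f, Λ (f.comp ⟨ψ, hψ⟩) = Λ f) :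
    ∃ μ : Measure S, IsInvariantProbability ψ μ ∧ ∀ f : C(S, ℝ), ∫ x, f x ∂μ = Λ f := by
  obtain ⟨μ, hreg, hμ⟩ := exists_regular_measure_integral_eq Λ
  have hmass : μ.real univ = 1 := by simpa [hone] using hμ 1
  have hprob : IsProbabilityMeasure μ := ⟨(ENNReal.toReal_eq_one_iff _).1 hmass⟩
  have hpres : MeasurePreserving ψ μ μ :=
    measurePreserving_of_integral_comp_eq hψ fun f => by
      simpa [hμ] using (hμ (f.comp ⟨ψ, hψ⟩)).trans (hinv f)
  exact ⟨μ, ⟨hprob, hreg, hpres⟩, hμ⟩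

theorem exists_isInvariantProbability_tendsto_birkhoffAverage {ψ : S → S} (hψ : Continuous ψ)
    {ι : Type*} {U : Ultrafilter ι} {n : ι → ℕ} (hn : Tendsto n U atTop) (x : ι → S) :
    ∃ μ : Measure S, IsInvariantProbability ψ μ ∧ ∀ f : C(S, ℝ),
      Tendsto (fun i => birkhoffAverage ℝ ψ f (n i) (x i)) U (𝓝 (∫ y, f y ∂μ)) := by
  obtain ⟨Λ, hΛ⟩ := exists_positiveLinearMap_tendsto
    (Λ := fun i => birkhoffFunctional ψ (n i) (x i))
    fun f => exists_tendsto_birkhoffAverage_ultrafilter hn ψ x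
      (isCompact_range f.continuous).totallyBounded
  have hone : Λ 1 = 1 := by
    refine tendsto_nhds_unique (hΛ 1) (tendsto_const_nhds.congr' ?_)
    filter_upwards [hn.eventually_ne_atTop 0] with i hi
    have hconst : birkhoffAverage ℝ ψ (1 : C(S, ℝ)) (n i) = (1 : C(S, ℝ)) :=
      birkhoffAverage_of_comp_eq ℝ rfl (Nat.cast_ne_zero.2 hi)
    exact (congrFun hconst (x i)).symm
  have hinv (f : C(S, ℝ)) : Λ (f.comp ⟨ψ, hψ⟩) = Λ f := by
    refine sub_eq_zero.1 <| tendsto_nhds_unique ((hΛ _).sub (hΛ f)) ?_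
    refine (tendsto_birkhoffAverage_apply_sub (φ := ψ)
      (isCompact_range f.continuous).isBounded hn x).congr fun i => ?_
    rw [← birkhoffAverage_comp_of_semiconj ℝ (fun _ => rfl : Semiconj ψ ψ ψ)]
    rfl
  obtain ⟨μ, hμ, hμΛ⟩ := exists_isInvariantProbability_of_positiveLinearMap hψ Λ hone hinv
  exact ⟨μ, hμ, fun f => hμΛ f ▸ hΛ f⟩

theorem exists_isInvariantProbability [Nonempty S] {ψ : S → S} (hψ : Continuous ψ) :
    ∃ μ : Measure S, IsInvariantProbability ψ μ := by
  obtain ⟨x⟩ := ‹Nonempty S›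
  obtain ⟨μ, hμ, -⟩ := exists_isInvariantProbability_tendsto_birkhoffAverage hψ
    (U := hyperfilter ℕ) (n := id) Nat.hyperfilter_le_atTop fun _ => x
  exact ⟨μ, hμ⟩

theorem tendstoUniformly_birkhoffAverage_integral [NormedAddCommGroup E] [NormedSpace ℝ E]
    [CompleteSpace E] {ψ : S → S} (hψ : Continuous ψ) {μ : Measure S} [IsFiniteMeasure μ]
    (huniq : ∀ ν, IsInvariantProbability ψ ν → ν = μ) (f : C(S, E)) :
    TendstoUniformly (birkhoffAverage ℝ ψ f) (fun _ => ∫ x, f x ∂μ) atTop := by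
  rw [← tendsto_prod_top_iff, tendsto_iff_ultrafilter]
  intro U hU
  have hn : Tendsto Prod.fst (U : Filter (ℕ × S)) atTop := tendsto_fst.mono_left hU
  obtain ⟨ν, hν, hlim⟩ := exists_isInvariantProbability_tendsto_birkhoffAverage hψ hn Prod.snd
  obtain rfl := huniq ν hν
  exact tendsto_birkhoffAverage_integral_of_real hn hlim f

end InvariantMeasure

section UniquelyErgodic

variable {S E : Type*} [TopologicalSpace S] [CompactSpace S] [T2Space S] {ψ : S → S}

theorem UniquelyErgodic.exists_tendstoUniformly_birkhoffAverage [NormedAddCommGroup E]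
    [NormedSpace ℝ E] [CompleteSpace E] (h : UniquelyErgodic ψ) (hψ : Continuous ψ)
    (f : C(S, E)) : ∃ c : E, TendstoUniformly (birkhoffAverage ℝ ψ f) (fun _ => c) atTop := by
  borelize S
  obtain ⟨μ, ⟨hprob, -, -⟩, huniq⟩ := h
  exact ⟨_, tendstoUniformly_birkhoffAverage_integral hψ huniq f⟩

theorem uniquelyErgodic_of_tendsto_birkhoffAverage (𝕜 : Type*) [RCLike 𝕜] [Nonempty S]
    (hψ : Continuous ψ)
    (h : ∀ f : C(S, 𝕜), ∃ c : 𝕜, ∀ x, Tendsto (birkhoffAverage ℝ ψ f · x) atTop (𝓝 c)) :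
    UniquelyErgodic ψ := by
  borelize S
  obtain ⟨μ, hμ⟩ := exists_isInvariantProbability hψ
  refine ⟨μ, hμ, fun ν hν => ?_⟩
  obtain ⟨hμ₁, hμreg, hμinv⟩ := hμ
  obtain ⟨hν₁, hνreg, hνinv⟩ := hν
  refine measure_ext_of_integral_continuousMap_eq fun f => RCLike.ofReal_injective (K := 𝕜) ?_
  let f𝕜 : C(S, 𝕜) := ⟨fun x => f x, RCLike.continuous_ofReal.comp f.continuous⟩
  obtain ⟨c, hc⟩ := h f𝕜
  have hintegral (κ : Measure S) [IsProbabilityMeasure κ] (hκ : MeasurePreserving ψ κ κ) :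
      ((∫ x, f x ∂κ : ℝ) : 𝕜) = c := by
    calc ((∫ x, f x ∂κ : ℝ) : 𝕜) = ∫ x, f𝕜 x ∂κ := integral_ofReal.symm
      _ = ∫ _, c ∂κ := integral_eq_integral_of_tendsto_birkhoffAverage hψ hκ f𝕜 hc
      _ = c := by simp
  exact (hintegral ν hνinv).trans (hintegral μ hμinv).symm

end UniquelyErgodic

section MeanErgodic

variable {K L : Type*} [TopologicalSpace K] {φ : K → K}

theorem meanErgodic_iff_tendstoUniformly_birkhoffAverage :
    MeanErgodic φ ↔
      ∀ f : C(K, ℂ), ∃ g : K → ℂ, TendstoUniformly (birkhoffAverage ℝ φ f) g atTop := by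
  simp only [birkhoffAverage_congr_ring' ℝ ℂ]
  rfl

theorem MeanErgodic.exists_invariant_limit [CompactSpace K] (h : MeanErgodic φ)
    (hφ : Continuous φ) (f : C(K, ℂ)) :
    ∃ g : C(K, ℂ), (∀ x, g (φ x) = g x) ∧
      ∀ x, Tendsto (birkhoffAverage ℝ φ f · x) atTop (𝓝 (g x)) := by
  obtain ⟨g, hg⟩ := meanErgodic_iff_tendstoUniformly_birkhoffAverage.1 h f
  have hcont : Continuous g := hg.continuous <| .of_forall fun n =>
    continuous_birkhoffAverage hφ f.continuous n
  refine ⟨⟨g, hcont⟩, fun x => ?_, hg.tendsto_at⟩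
  exact sub_eq_zero.1 <| tendsto_nhds_unique ((hg.tendsto_at (φ x)).sub (hg.tendsto_at x)) <|
    tendsto_birkhoffAverage_apply_sub (isCompact_range f.continuous).isBounded tendsto_id
      fun _ => x

theorem continuous_fiberMap (hφ : Continuous φ) {q : K → L} (hinv : ∀ x, q (φ x) = q x) (l : L) :
    Continuous (fiberMap φ q hinv l) :=
  (hφ.comp continuous_subtype_val).subtype_mk _

theorem birkhoffAverage_fiberMap_restrict {R M : Type*} [DivisionSemiring R] [AddCommMonoid M]
    [Module R M] [TopologicalSpace M] {q : K → L} (hinv : ∀ x, q (φ x) = q x) (f : C(K, M)) {l : L}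
    (n : ℕ) (x : q ⁻¹' {l}) :
    birkhoffAverage R (fiberMap φ q hinv l) (f.restrict (q ⁻¹' {l})) n x =
      birkhoffAverage R φ f n x :=
  birkhoffAverage_comp_of_semiconj R (i := Subtype.val) (fun _ => rfl) f n x

variable [CompactSpace K] [T2Space K] [TopologicalSpace L] {q : K → L}

theorem MeanErgodic.uniquelyErgodic_fiberMap [T1Space L] (h : MeanErgodic φ) (hφ : Continuous φ)
    (hq : Continuous q) (hinv : ∀ x, q (φ x) = q x)
    (hfactor : ∀ f : C(K, ℂ), (∀ x, f (φ x) = f x) → ∃ g : L → ℂ, ⇑f = g ∘ q) {l : L}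
    (hl : (q ⁻¹' {l}).Nonempty) : UniquelyErgodic (fiberMap φ q hinv l) := by
  have hclosed : IsClosed (q ⁻¹' {l}) := isClosed_singleton.preimage hq
  have : CompactSpace (q ⁻¹' {l}) := isCompact_iff_compactSpace.1 hclosed.isCompact
  have : Nonempty (q ⁻¹' {l}) := hl.to_subtype
  refine uniquelyErgodic_of_tendsto_birkhoffAverage ℂ (continuous_fiberMap hφ hinv l) fun f => ?_
  obtain ⟨F, rfl⟩ := f.exists_restrict_eq hclosed
  obtain ⟨G, hGinv, hG⟩ := h.exists_invariant_limit hφ F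
  obtain ⟨g, hGg⟩ := hfactor G hGinv
  refine ⟨g l, fun x => ?_⟩
  have hGx : G x = g l := (congrFun hGg x).trans (congrArg g x.2)
  simpa only [birkhoffAverage_fiberMap_restrict, hGx] using hG x

theorem meanErgodic_of_uniquelyErgodic_fiberMap [T2Space L] (hφ : Continuous φ)
    (hq : Continuous q) (hinv : ∀ x, q (φ x) = q x)
    (h : ∀ l, UniquelyErgodic (fiberMap φ q hinv l)) : MeanErgodic φ := by
  refine meanErgodic_iff_tendstoUniformly_birkhoffAverage.2 fun f => ?_
  have hfiber (l : L) : ∃ c : ℂ,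
      TendstoUniformlyOn (birkhoffAverage ℝ φ f) (fun _ => c) atTop (q ⁻¹' {l}) := by
    have : CompactSpace (q ⁻¹' {l}) :=
      isCompact_iff_compactSpace.1 (isClosed_singleton.preimage hq).isCompact
    obtain ⟨c, hc⟩ := (h l).exists_tendstoUniformly_birkhoffAverage
      (continuous_fiberMap hφ hinv l) (f.restrict (q ⁻¹' {l}))
    refine ⟨c, tendstoUniformlyOn_iff_tendstoUniformly_comp_coe.2 ?_⟩
    simpa only [TendstoUniformly, comp_apply, birkhoffAverage_fiberMap_restrict] using hc
  choose c hc using hfiber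
  exact ⟨c ∘ q, tendstoUniformly_birkhoffAverage_of_fibers hφ f hq hinv hc⟩

end MeanErgodic

/-- Let `(K, φ)` be a topological dynamical system and `q : K → L` a
projection onto its maximal trivial factor.  Then the Koopman operator `T_φ` is mean ergodic
on `C(K)` if and only if every fiber system `(K_l, φ_l)` is uniquely ergodic. -/
theorem meanErgodic_iff_fibers_uniquelyErgodic
    {K L : Type*} [TopologicalSpace K] [CompactSpace K] [T2Space K]
    [TopologicalSpace L] [CompactSpace L] [T2Space L]
    (φ : K → K) (hφ : Continuous φ)
    (q : K → L) (hq : Continuous q) (hqsurj : Function.Surjective q)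
    (hinv : ∀ x, q (φ x) = q x)
    (hmax : ∀ f : C(K, ℂ), (∀ x, f (φ x) = f x) ↔ ∃ g : C(L, ℂ), f = g.comp ⟨q, hq⟩) :
    MeanErgodic φ ↔ ∀ l : L, UniquelyErgodic (fiberMap φ q hinv l) := by
  refine ⟨fun h l => ?_, meanErgodic_of_uniquelyErgodic_fiberMap hφ hq hinv⟩
  refine h.uniquelyErgodic_fiberMap hφ hq hinv (fun f hf => ?_)
    ((Set.singleton_nonempty l).preimage hqsurj)
  obtain ⟨g, hg⟩ := (hmax f).1 hf
  exact ⟨g, congrArg DFunLike.coe hg⟩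
end

section
/- Let (K, B, p; φ) be a bundle of topological dynamical systems such that every fiber system (K_b, φ_b) is uniquely ergodic, and for each b ∈ B let μ_b denote the unique φ_b-invariant regular Borel probability measure on K_b, regarded as a measure on K supported on K_b. Then the map B → M(K), b ↦ μ_b, is continuous with respect to the weak* topology on the space M(K) of regular Borel measures on K (identified with the dual of C(K)). -/
open MeasureTheory

/-! Along an ultrafilter of points `c` converging to `b`, the measures `μ c` have a weak limit,
because the probability measures on the compact space `K` form a compact space, and this limit may
be taken regular by Riesz representation. Regular measures are determined by their integrals, so
limits commute with push-forwards: passing to the limit in `φ_* μ c = μ c` and `p_* μ c = δ_c` gives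
an invariant measure whose image under `p` is `δ_b`. By uniqueness it is `μ b`, so `μ c` tends to
`μ b` along every such ultrafilter. -/

open Filter Topology
open scoped BoundedContinuousFunction

section Regularity

variable {X Y : Type*} [TopologicalSpace X] [MeasurableSpace X] [BorelSpace X]
  [TopologicalSpace Y] [MeasurableSpace Y] [BorelSpace Y]

theorem regular_map_of_continuous [R1Space Y] {f : X → Y} (hf : Continuous f)
    (μ : Measure X) [μ.InnerRegularCompactLTTop] [IsFiniteMeasure μ] : (μ.map f).Regular :=
  have := Measure.InnerRegularCompactLTTop.map_of_continuous (μ := μ) hf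
  inferInstance

theorem regular_dirac [R1Space X] (x : X) : (Measure.dirac x).Regular := by
  simpa using regular_map_of_continuous (continuous_const (y := x)) (Measure.dirac ())

end Regularity

section WeakTopology

theorem inseparable_iff_forall_integral_eq {X : Type*} [TopologicalSpace X] [MeasurableSpace X]
    [OpensMeasurableSpace X] {μ ν : ProbabilityMeasure X} :
    Inseparable μ ν ↔ ∀ f : X →ᵇ ℝ, ∫ x, f x ∂(μ : Measure X) = ∫ x, f x ∂(ν : Measure X) := by
  refine ⟨fun h f ↦ (h.map
    (ProbabilityMeasure.continuous_integral_boundedContinuousFunction f)).eq, fun h ↦ ?_⟩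
  have hconst : Tendsto (fun _ : Unit ↦ μ) ⊤ (𝓝 ν) :=
    ProbabilityMeasure.tendsto_iff_forall_integral_tendsto.2 fun f ↦ by
      simpa only [h f] using tendsto_const_nhds
  exact tendsto_nhds_unique_inseparable tendsto_const_nhds hconst

theorem continuous_integral_continuousMap_rclike {X 𝕜 : Type*} [TopologicalSpace X]
    [CompactSpace X] [MeasurableSpace X] [OpensMeasurableSpace X] [RCLike 𝕜] (f : C(X, 𝕜)) :
    Continuous fun μ : ProbabilityMeasure X ↦ ∫ x, f x ∂(μ : Measure X) :=
  continuous_iff_continuousAt.2 fun _ ↦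
    (ProbabilityMeasure.tendsto_iff_forall_integral_rclike_tendsto 𝕜).1 tendsto_id
      (BoundedContinuousFunction.mkOfCompact f)

variable {X Y : Type*} [TopologicalSpace X] [MeasurableSpace X] [BorelSpace X]
  [TopologicalSpace Y] [T2Space Y] [MeasurableSpace Y] [BorelSpace Y]

theorem eq_of_inseparable_of_regular [LocallyCompactSpace Y] {μ ν : ProbabilityMeasure Y}
    [(μ : Measure Y).Regular] [(ν : Measure Y).Regular] (h : Inseparable μ ν) : μ = ν :=
  ProbabilityMeasure.toMeasure_injective <| Measure.ext_of_integral_eq_on_compactlySupported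
    fun f ↦ inseparable_iff_forall_integral_eq.1 h f.toBoundedContinuousFunction

theorem exists_regular_inseparable [CompactSpace Y] (μ : ProbabilityMeasure Y) :
    ∃ ν : ProbabilityMeasure Y, (ν : Measure Y).Regular ∧ Inseparable μ ν := by
  obtain ⟨ν, hreg, -, hint⟩ := Measure.exists_regular_eq_of_compactSpace (μ : Measure Y)
  have hprob : IsProbabilityMeasure ν := ⟨by
    have hmass : ν.real Set.univ = 1 := by simpa using (hint 1).symm
    exact (ENNReal.toReal_eq_one_iff _).1 hmass⟩
  exact ⟨⟨ν, hprob⟩, hreg, inseparable_iff_forall_integral_eq.2 hint⟩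

theorem exists_regular_tendsto_ultrafilter [CompactSpace Y] {ι : Type*} (U : Ultrafilter ι)
    (μ : ι → ProbabilityMeasure Y) :
    ∃ ν : ProbabilityMeasure Y, (ν : Measure Y).Regular ∧ Tendsto μ U (𝓝 ν) := by
  obtain ⟨ν, hreg, hν⟩ := exists_regular_inseparable (U.map μ).lim
  exact ⟨ν, hreg, hν.nhds_eq ▸ (U.map μ).le_nhds_lim⟩

theorem map_eq_of_tendsto [LocallyCompactSpace Y] {ι : Type*} {l : Filter ι} [l.NeBot]
    {μ : ι → ProbabilityMeasure X} {ν : ProbabilityMeasure X} {κ : ProbabilityMeasure Y}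
    [(ν : Measure X).InnerRegularCompactLTTop] [(κ : Measure Y).Regular]
    {f : X → Y} (hf : Continuous f) (hμ : Tendsto μ l (𝓝 ν))
    (hmap : Tendsto (fun i ↦ (μ i).map hf.measurable.aemeasurable) l (𝓝 κ)) :
    ν.map hf.measurable.aemeasurable = κ :=
  have : (ν.map hf.measurable.aemeasurable : Measure Y).Regular := regular_map_of_continuous hf _
  eq_of_inseparable_of_regular <|
    tendsto_nhds_unique_inseparable
      (ProbabilityMeasure.tendsto_map_of_tendsto_of_continuous μ ν hμ hf) hmap

theorem map_eq_self_of_tendsto [LocallyCompactSpace Y] {ι : Type*} {l : Filter ι} [l.NeBot]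
    {μ : ι → ProbabilityMeasure Y} {ν : ProbabilityMeasure Y} [(ν : Measure Y).Regular]
    {φ : Y → Y} (hφ : Continuous φ) (hμ : Tendsto μ l (𝓝 ν))
    (hinv : ∀ i, (μ i : Measure Y).map φ = μ i) : (ν : Measure Y).map φ = ν := by
  have hmap : (fun i ↦ (μ i).map hφ.measurable.aemeasurable) = μ :=
    funext fun i ↦ Subtype.ext (hinv i)
  exact congrArg Subtype.val (map_eq_of_tendsto hφ hμ (by rwa [hmap]))

end WeakTopology

theorem map_eq_diracProba_iff {X Y : Type*} [MeasurableSpace X] [MeasurableSpace Y]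
    [MeasurableSingletonClass Y] {f : X → Y} (hf : Measurable f) {μ : ProbabilityMeasure X}
    {y : Y} :
    μ.map hf.aemeasurable = diracProba y ↔ (μ : Measure X) (f ⁻¹' {y})ᶜ = 0 := by
  refine ⟨fun h ↦ ?_, fun h ↦ ProbabilityMeasure.toMeasure_injective ?_⟩
  · have hmap : (μ : Measure X).map f = Measure.dirac y := congrArg Subtype.val h
    rw [← Set.preimage_compl, ← Measure.map_apply hf (measurableSet_singleton y).compl, hmap]
    simp
  · have hconst : f =ᵐ[(μ : Measure X)] fun _ ↦ y := h
    calc (μ : Measure X).map f = (μ : Measure X).map fun _ ↦ y := Measure.map_congr hconst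
      _ = Measure.dirac y := by simp

theorem measure_compl_fiber_eq_zero_of_tendsto
    {X B ι : Type*} [TopologicalSpace X] [MeasurableSpace X] [BorelSpace X]
    [TopologicalSpace B] [LocallyCompactSpace B] [T2Space B] {l : Filter ι} [l.NeBot]
    {μ : ι → ProbabilityMeasure X} {ν : ProbabilityMeasure X}
    [(ν : Measure X).InnerRegularCompactLTTop] {b : ι → B} {b₀ : B} {p : X → B}
    (hp : Continuous p) (hμ : Tendsto μ l (𝓝 ν)) (hb : Tendsto b l (𝓝 b₀))
    (hsupp : ∀ i, (μ i : Measure X) (p ⁻¹' {b i})ᶜ = 0) :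
    (ν : Measure X) (p ⁻¹' {b₀})ᶜ = 0 := by
  borelize B
  have hmap i : (μ i).map hp.measurable.aemeasurable = diracProba (b i) :=
    (map_eq_diracProba_iff hp.measurable).2 (hsupp i)
  have hlim : Tendsto (fun i ↦ (μ i).map hp.measurable.aemeasurable) l (𝓝 (diracProba b₀)) := by
    simpa only [hmap] using! (continuous_diracProba.tendsto b₀).comp hb
  have : (diracProba b₀ : Measure B).Regular := regular_dirac b₀
  exact (map_eq_diracProba_iff hp.measurable).1 (map_eq_of_tendsto hp hμ hlim)

theorem fiber_measures_weakStar_continuous_general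
    {K B : Type*} [TopologicalSpace K] [CompactSpace K] [T2Space K]
    [MeasurableSpace K] [BorelSpace K]
    [TopologicalSpace B] [CompactSpace B] [T2Space B]
    {φ : K → K} (hφ : Continuous φ) {p : K → B} (hp : Continuous p)
    (μ : B → ProbabilityMeasure K)
    (hμsupp : ∀ b, (μ b : Measure K) (p ⁻¹' {b})ᶜ = 0)
    (hμinv : ∀ b, (μ b : Measure K).map φ = μ b)
    (hμuniq : ∀ b (ν : ProbabilityMeasure K), (ν : Measure K).Regular →
      (ν : Measure K) (p ⁻¹' {b})ᶜ = 0 → (ν : Measure K).map φ = ν → ν = μ b) :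
    Continuous μ := by
  refine continuous_iff_continuousAt.2 fun b ↦ (tendsto_iff_ultrafilter _ _ _).2 fun U hU ↦ ?_
  obtain ⟨ν, hreg, hlim⟩ := exists_regular_tendsto_ultrafilter U μ
  have hsupp : (ν : Measure K) (p ⁻¹' {b})ᶜ = 0 :=
    measure_compl_fiber_eq_zero_of_tendsto hp hlim hU hμsupp
  have hinv : (ν : Measure K).map φ = ν := map_eq_self_of_tendsto hφ hlim hμinv
  exact hμuniq b ν hreg hsupp hinv ▸ hlim

/-- Let `(K, B, p; φ)` be a bundle of topological dynamical systems such
that every fiber system `(K_b, φ_b)` is uniquely ergodic, and for `b ∈ B` let `μ b` denote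
the unique `φ`-invariant regular Borel probability measure on `K` supported on the fiber
`K_b = p⁻¹ {b}`.  Then `b ↦ μ b` is continuous with respect to the weak* topology on `M(K)`,
i.e. for every `f ∈ C(K)` the map `b ↦ ∫ f dμ_b` is continuous. -/
theorem fiber_measures_weakStar_continuous
    {K B : Type*} [TopologicalSpace K] [CompactSpace K] [T2Space K]
    [MeasurableSpace K] [BorelSpace K]
    [TopologicalSpace B] [CompactSpace B] [T2Space B]
    (φ : K → K) (hφ : Continuous φ)
    (p : K → B) (hp : Continuous p) (hpsurj : Function.Surjective p)
    (hinv : ∀ x, p (φ x) = p x)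
    (μ : B → Measure K)
    (hμprob : ∀ b, IsProbabilityMeasure (μ b))
    (hμreg : ∀ b, (μ b).Regular)
    (hμsupp : ∀ b, μ b ((p ⁻¹' {b})ᶜ) = 0)
    (hμinv : ∀ b, (μ b).map φ = μ b)
    (hμuniq : ∀ b (ν : Measure K), IsProbabilityMeasure ν → ν.Regular →
      ν ((p ⁻¹' {b})ᶜ) = 0 → ν.map φ = ν → ν = μ b) :
    ∀ f : C(K, ℂ), Continuous fun b : B => ∫ x, f x ∂(μ b) := by
  exact fun f ↦ (continuous_integral_continuousMap_rclike f).comp <|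
    fiber_measures_weakStar_continuous_general hφ hp (fun b ↦ ⟨μ b, hμprob b⟩) hμsupp hμinv
      fun b ν hreg hsupp hinv ↦ Subtype.ext (hμuniq b ν inferInstance hreg hsupp hinv)
end

section
/- Let (K, φ) be a topological dynamical system. Then the Koopman operator T_φ has discrete spectrum on C(K) if and only if φ is a bijection (hence a homeomorphism) and the family {φ^n : n ∈ ℕ} is uniformly equicontinuous with respect to the unique uniformity of K. -/
/-- A topological dynamical system has discrete spectrum if the linear span of the
eigenvectors of its Koopman operator with unimodular eigenvalues is dense in `C(K)`. -/
def DiscreteSpectrum {K : Type*} [TopologicalSpace K] (φ : K → K) : Prop :=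
  Dense (↑(Submodule.span ℂ
    {f : C(K, ℂ) | f ≠ 0 ∧ ∃ lam : ℂ, ‖lam‖ = 1 ∧ ∀ x, f (φ x) = lam * f x}) :
      Set C(K, ℂ))

/-!
If the span of the eigenfunctions is dense, then they separate the points of `K`, so together they
embed `K` uniformly into a power of `ℂ`. There `φ` becomes the coordinatewise rotation by a point
`c` of a torus, and the powers of `c` act equicontinuously and return arbitrarily close to `1`.

Conversely, the Koopman operator `T` is a linear isometry with relatively compact orbits. If a
continuous linear map `L` satisfies `L v ≠ 0`, the set `R` of return times of `v` has positive
density, so the sum of `L (T ^ (m + l) v)` over `m, l ∈ R` is large. Fourier analysis on `ZMod N`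
then provides a circle element `c` with a large twisted average `(1 / N) ∑ cⁿ L (Tⁿ v)`. By
compactness these averages cluster at `L w` for an eigenvector `w`, so that `L w ≠ 0`. Applied to
the quotient map by the closed span of the eigenvectors, this shows that the quotient vanishes.
-/

open Filter Topology

section FiniteFourier

variable {G : Type*} [AddCommGroup G] [Fintype G]

theorem sum_addChar_neg_smul_sum {V : Type*} [AddCommGroup V] [Module ℂ V] (b : G → V) (k : G) :
    ∑ ψ : AddChar G ℂ, ψ (-k) • ∑ n, ψ n • b n = (Fintype.card G : ℂ) • b k := by
  classical
  calc ∑ ψ : AddChar G ℂ, ψ (-k) • ∑ n, ψ n • b n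
      = ∑ n, (∑ ψ : AddChar G ℂ, ψ (n - k)) • b n := by
        simp only [Finset.smul_sum, Finset.sum_smul, smul_smul, ← AddChar.map_add_eq_mul,
          neg_add_eq_sub]
        exact Finset.sum_comm
    _ = (Fintype.card G : ℂ) • b k := by
        simp [AddChar.sum_apply_eq_ite, sub_eq_zero, ite_smul]

theorem sum_norm_sq_sum_addChar (A : Finset G) :
    ∑ ψ : AddChar G ℂ, ‖∑ m ∈ A, ψ m‖ ^ 2 = Fintype.card G * A.card := by
  classical
  have parseval : ∑ ψ : AddChar G ℂ, (∑ m ∈ A, ψ (-m)) * ∑ m ∈ A, ψ m =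
      (Fintype.card G : ℂ) * A.card := by
    have inversion (m : G) := sum_addChar_neg_smul_sum (fun n => if n ∈ A then (1 : ℂ) else 0) m
    simp only [smul_eq_mul, mul_ite, mul_one, mul_zero, Finset.sum_ite_mem,
      Finset.univ_inter] at inversion
    simp only [Finset.sum_mul]
    rw [Finset.sum_comm, Finset.sum_congr rfl fun m _ => inversion m]
    simp [mul_comm]
  have norm_sq (ψ : AddChar G ℂ) :
      (∑ m ∈ A, ψ (-m)) * ∑ m ∈ A, ψ m = ((‖∑ m ∈ A, ψ m‖ ^ 2 : ℝ) : ℂ) := by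
    simp only [AddChar.map_neg_eq_conj, ← map_sum, Complex.conj_mul', Complex.ofReal_pow]
  simp only [norm_sq] at parseval
  exact_mod_cast parseval

theorem exists_addChar_norm_sum_sum_add_le {V : Type*} [SeminormedAddCommGroup V]
    [NormedSpace ℂ V] (A : Finset G) (b : G → V) :
    ∃ ψ : AddChar G ℂ,
      ‖∑ m ∈ A, ∑ l ∈ A, b (m + l)‖ ≤ A.card * ‖∑ n, ψ n • b n‖ := by
  -- The largest Fourier coefficient of `b` works: expand each `b (m + l)` by Fourier inversion and
  -- bound the remaining sum of `‖∑ m ∈ A, ψ m‖ ^ 2` by Parseval's identity.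
  obtain ⟨χ, hχ⟩ := Finite.exists_max fun ψ : AddChar G ℂ => ‖∑ n, ψ n • b n‖
  have inversion : (Fintype.card G : ℂ) • ∑ m ∈ A, ∑ l ∈ A, b (m + l) =
      ∑ ψ : AddChar G ℂ, (∑ m ∈ A, ψ (-m)) ^ 2 • ∑ n, ψ n • b n := by
    simp only [Finset.smul_sum (r := (Fintype.card G : ℂ)), ← sum_addChar_neg_smul_sum b, sq,
      Finset.sum_mul_sum, Finset.sum_smul, neg_add, AddChar.map_add_eq_mul]
    rw [Finset.sum_comm (s := Finset.univ)]
    exact Finset.sum_congr rfl fun m _ => Finset.sum_comm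
  have norm_neg (ψ : AddChar G ℂ) : ‖∑ m ∈ A, ψ (-m)‖ = ‖∑ m ∈ A, ψ m‖ := by
    simp only [AddChar.map_neg_eq_conj, ← map_sum, RCLike.norm_conj]
  refine ⟨χ, le_of_mul_le_mul_left ?_ (Nat.cast_pos.2 (Fintype.card_pos (α := G)) : (0 : ℝ) < _)⟩
  calc (Fintype.card G : ℝ) * ‖∑ m ∈ A, ∑ l ∈ A, b (m + l)‖
      = ‖∑ ψ : AddChar G ℂ, (∑ m ∈ A, ψ (-m)) ^ 2 • ∑ n, ψ n • b n‖ := by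
        rw [← inversion, norm_smul, Complex.norm_natCast]
    _ ≤ ∑ ψ : AddChar G ℂ, ‖∑ m ∈ A, ψ m‖ ^ 2 * ‖∑ n, χ n • b n‖ := by
        refine norm_sum_le_of_le _ fun ψ _ => ?_
        rw [norm_smul, norm_pow, norm_neg]
        gcongr
        exact hχ ψ
    _ = Fintype.card G * (A.card * ‖∑ n, χ n • b n‖) := by
        rw [← Finset.sum_mul, sum_norm_sq_sum_addChar, mul_assoc]

end FiniteFourier

theorem exists_circle_norm_sum_sum_add_le {V : Type*} [SeminormedAddCommGroup V]
    [NormedSpace ℂ V] {N : ℕ} {A : Finset ℕ} (hA : ∀ m ∈ A, ∀ l ∈ A, m + l < N) (b : ℕ → V) :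
    ∃ c : Circle, ‖∑ m ∈ A, ∑ l ∈ A, b (m + l)‖ ≤
      A.card * ‖∑ n ∈ Finset.range N, c ^ n • b n‖ := by
  rcases A.eq_empty_or_nonempty with rfl | ⟨k, hk⟩
  · simp
  have : NeZero N := ⟨(hA k hk k hk).ne_bot⟩
  have cast_injOn : Set.InjOn (Nat.cast : ℕ → ZMod N) A := fun m hm l hl h => by
    rw [ZMod.natCast_eq_natCast_iff] at h
    exact h.eq_of_lt_of_lt ((Nat.le_add_right m m).trans_lt (hA m hm m hm))
      ((Nat.le_add_right l l).trans_lt (hA l hl l hl))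
  obtain ⟨ψ, hψ⟩ := exists_addChar_norm_sum_sum_add_le (A.image (Nat.cast : ℕ → ZMod N))
    fun n => b n.val
  obtain ⟨χ, rfl⟩ := AddChar.circleEquivComplex.surjective ψ
  have fourier_sum : ∑ n : ZMod N, AddChar.circleEquivComplex χ n • b n.val =
      ∑ n ∈ Finset.range N, χ 1 ^ n • b n := by
    refine Finset.sum_bij' (fun n _ => n.val) (fun n _ => n) (fun n _ => ?_) (by simp)
      (by simp) (fun n hn => ?_) (fun n _ => ?_)
    · simpa using n.val_lt
    · exact ZMod.val_natCast_of_lt (Finset.mem_range.1 hn)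
    · rw [← AddChar.map_nsmul_eq_pow, nsmul_one, ZMod.natCast_zmod_val]
      rfl
  refine ⟨χ 1, ?_⟩
  rw [Finset.sum_image cast_injOn, Finset.card_image_of_injOn cast_injOn, fourier_sum] at hψ
  convert hψ using 4 with m hm
  rw [Finset.sum_image cast_injOn]
  refine Finset.sum_congr rfl fun l hl => ?_
  rw [← Nat.cast_add, ZMod.val_natCast_of_lt (hA m hm l hl)]

theorem card_mul_norm_sub_le_norm_sum {ι V : Type*} [SeminormedAddCommGroup V] {s : Finset ι}
    [NormedSpace ℝ V] {f : ι → V} {y : V} {r : ℝ} (h : ∀ i ∈ s, ‖f i - y‖ ≤ r) :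
    s.card * (‖y‖ - r) ≤ ‖∑ i ∈ s, f i‖ := by
  have norm_sum_sub_le : ‖∑ i ∈ s, (f i - y)‖ ≤ s.card * r := by
    simpa using norm_sum_le_of_le s h
  have norm_sum_const : ‖∑ _i ∈ s, y‖ = s.card * ‖y‖ := by
    rw [Finset.sum_const, ← Nat.cast_smul_eq_nsmul ℝ, norm_smul, Real.norm_natCast]
  rw [Finset.sum_sub_distrib, ← norm_neg, neg_sub] at norm_sum_sub_le
  linarith [norm_sub_norm_le (∑ _i ∈ s, y) (∑ i ∈ s, f i)]

theorem exists_circle_card_mul_norm_sub_le {V : Type*} [SeminormedAddCommGroup V]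
    [NormedSpace ℂ V] {N : ℕ} {A : Finset ℕ} (hA : ∀ m ∈ A, ∀ l ∈ A, m + l < N) {b : ℕ → V}
    {y : V} {r : ℝ} (hb : ∀ m ∈ A, ∀ l ∈ A, ‖b (m + l) - y‖ ≤ r) :
    ∃ c : Circle, A.card * (‖y‖ - r) ≤ ‖∑ n ∈ Finset.range N, c ^ n • b n‖ := by
  rcases A.eq_empty_or_nonempty with rfl | A_nonempty
  · simp
  obtain ⟨c, hc⟩ := exists_circle_norm_sum_sum_add_le hA b
  refine ⟨c, le_of_mul_le_mul_left ?_ (Nat.cast_pos.2 A_nonempty.card_pos : (0 : ℝ) < A.card)⟩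
  calc A.card * (A.card * (‖y‖ - r)) = (A ×ˢ A).card * (‖y‖ - r) := by
        rw [Finset.card_product, Nat.cast_mul, mul_assoc]
    _ ≤ ‖∑ q ∈ A ×ˢ A, b (q.1 + q.2)‖ := card_mul_norm_sub_le_norm_sum fun q hq =>
        hb _ (Finset.mem_product.1 hq).1 _ (Finset.mem_product.1 hq).2
    _ = ‖∑ m ∈ A, ∑ l ∈ A, b (m + l)‖ := by rw [Finset.sum_product]
    _ ≤ _ := hc

theorem isometry_iterate {X : Type*} [PseudoEMetricSpace X] {T : X → X} (hT : Isometry T)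
    (n : ℕ) : Isometry T^[n] :=
  Nat.rec isometry_id (fun _ hn => hn.comp hT) n

theorem dist_iterate_add_le {X : Type*} [PseudoMetricSpace X] {T : X → X} (hT : Isometry T)
    (m l : ℕ) (x : X) : dist (T^[m + l] x) x ≤ dist (T^[m] x) x + dist (T^[l] x) x := by
  rw [Function.iterate_add_apply, add_comm, ← (isometry_iterate hT m).dist_eq (T^[l] x) x]
  exact dist_triangle _ _ _

open Finset in
theorem exists_forall_le_mul_card_return_times {X : Type*} [PseudoMetricSpace X] {T : X → X}
    (hT : Isometry T) {x : X} (hx : TotallyBounded (Set.range fun n : ℕ => T^[n] x))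
    {ε : ℝ} (hε : 0 < ε) :
    ∃ C : ℕ, ∀ p : ℕ, p ≤ C * #{m ∈ range p | dist (T^[m] x) x < ε} := by
  classical
  obtain ⟨t, t_finite, t_cover⟩ := Metric.totallyBounded_iff.1 hx (ε / 2) (half_pos hε)
  have exists_center (n : ℕ) : ∃ y ∈ t, dist (T^[n] x) y < ε / 2 := by
    simpa using t_cover ⟨n, rfl⟩
  choose center center_mem dist_center using exists_center
  -- Subtracting the first time of a fibre turns all its times into return times.
  have fibre_card (p : ℕ) (y : X) : #{n ∈ range p | center n = y} ≤
      #{m ∈ range p | dist (T^[m] x) x < ε} := by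
    rcases eq_empty_or_nonempty {n ∈ range p | center n = y} with h | h
    · simp [h]
    obtain ⟨k, hk, k_le⟩ := exists_min_image _ id h
    refine card_le_card_of_injOn (· - k) (fun n hn => ?_) fun n hn m hm hnm => ?_
    · have hkn : k ≤ n := k_le n hn
      simp only [coe_filter, mem_filter, mem_range, Set.mem_ofPred_eq] at hk hn ⊢
      refine ⟨by omega, ?_⟩
      calc dist (T^[n - k] x) x = dist (T^[n] x) (T^[k] x) := by
            rw [← (isometry_iterate hT k).dist_eq, ← Function.iterate_add_apply,
              Nat.add_sub_cancel' hkn]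
        _ ≤ dist (T^[n] x) y + dist (T^[k] x) y := dist_triangle_right _ _ _
        _ < ε / 2 + ε / 2 := add_lt_add (hn.2 ▸ dist_center n) (hk.2 ▸ dist_center k)
        _ = ε := add_halves ε
    · exact tsub_left_inj (k_le n hn) (k_le m hm) |>.1 hnm
  refine ⟨#t_finite.toFinset, fun p => ?_⟩
  rw [mul_comm]
  simpa using card_le_mul_card_image_of_maps_to
    (fun n _ => t_finite.mem_toFinset.2 (center_mem n)) _ fun y _ => fibre_card p y

theorem birkhoffAverage_mem_convexHull {α E : Type*} [AddCommGroup E] [Module ℝ E] {s : Set E}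
    {f : α → α} {g : α → E} {n : ℕ} (hn : n ≠ 0) {x : α} (h : ∀ k, g (f^[k] x) ∈ s) :
    birkhoffAverage ℝ f g n x ∈ convexHull ℝ s := by
  rw [birkhoffAverage, birkhoffSum, Finset.smul_sum]
  refine (convex_convexHull ℝ s).sum_mem (fun _ _ => by positivity) ?_
    fun k _ => subset_convexHull ℝ s (h k)
  simp [hn]

section UnimodularEigenvectors

variable {E F : Type*} [NormedAddCommGroup E] [NormedSpace ℂ E] [NormedAddCommGroup F]
  [NormedSpace ℂ F]

/-- The vectors `v` with `T v = c • v` for some `c` of modulus one, including `v = 0`. The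
eigenvalue is taken in `Circle`, so that the compactness of the circle is available. -/
def unimodularEigenvectors (T : E →L[ℂ] E) : Set E := {v | ∃ c : Circle, T v = c • v}

theorem circle_smul_iterate_apply (T : E →L[ℂ] E) (c : Circle) (n : ℕ) (v : E) :
    (⇑(c • T))^[n] v = c ^ n • T^[n] v := by
  have smul_commute : Function.Commute (c • · : E → E) T := fun w => (T.map_smul_of_tower c w).symm
  exact (congrFun (smul_commute.comp_iterate n) v).trans (smul_iterate_apply c n _)

theorem exists_isCompact_birkhoffAverage_smul_mem [CompleteSpace E] {T : E →L[ℂ] E} {v : E}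
    (hv : TotallyBounded (Set.range fun n : ℕ => T^[n] v)) :
    ∃ s : Set E, IsCompact s ∧
      ∀ (c : Circle) (n : ℕ), n ≠ 0 → birkhoffAverage ℝ (c • T) id n v ∈ s := by
  have twisted_orbits_compact : IsCompact ((fun p : Circle × E => p.1 • p.2) ''
      (Set.univ ×ˢ closure (Set.range fun n : ℕ => T^[n] v))) :=
    (isCompact_univ.prod (hv.closure.isCompact_of_isClosed isClosed_closure)).image
      continuous_smul
  refine ⟨closure (convexHull ℝ _), (totallyBounded_convexHull.2
    twisted_orbits_compact.totallyBounded).closure.isCompact_of_isClosed isClosed_closure,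
    fun c n hn => subset_closure (birkhoffAverage_mem_convexHull hn fun k => ?_)⟩
  exact ⟨(c ^ k, T^[k] v), ⟨trivial, subset_closure ⟨k, rfl⟩⟩,
    (circle_smul_iterate_apply T c k v).symm⟩

theorem tendsto_smul_birkhoffAverage_sub {T : E →L[ℂ] E} {v : E}
    (hv : Bornology.IsBounded (Set.range fun n : ℕ => T^[n] v)) (c : ℕ → Circle) :
    Tendsto (fun n => c n • T (birkhoffAverage ℝ (c n • T) id n v) -
      birkhoffAverage ℝ (c n • T) id n v) atTop (𝓝 0) := by
  obtain ⟨B, hB⟩ := hv.exists_norm_le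
  refine squeeze_zero_norm (fun n => ?_) (tendsto_const_div_atTop_nhds_zero_nat (B + B))
  have map_average : c n • T (birkhoffAverage ℝ (c n • T) id n v) =
      birkhoffAverage ℝ (c n • T) id n ((c n • T) v) := by
    refine (map_birkhoffAverage ℝ ℝ (c n • T) _ _ _ _).trans ?_
    simp only [birkhoffAverage, birkhoffSum, Function.comp_apply, id, ← Function.iterate_succ_apply,
      ← Function.iterate_succ_apply']
  rw [map_average, ← dist_eq_norm, dist_birkhoffAverage_apply_birkhoffAverage, id, id,
    circle_smul_iterate_apply]
  gcongr
  refine (dist_le_norm_add_norm _ _).trans (add_le_add ?_ (hB v ⟨0, rfl⟩))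
  rw [Circle.norm_smul]
  exact hB _ ⟨n, rfl⟩

theorem exists_tendsto_birkhoffAverage_smul [CompleteSpace E] {T : E →L[ℂ] E} {v : E}
    (hv : TotallyBounded (Set.range fun n : ℕ => T^[n] v)) (c : ℕ → Circle) :
    ∃ w ∈ unimodularEigenvectors T, ∃ N : ℕ → ℕ, StrictMono N ∧
      Tendsto (fun k => birkhoffAverage ℝ (c (N k) • T) id (N k) v) atTop (𝓝 w) := by
  obtain ⟨s, s_compact, average_mem⟩ := exists_isCompact_birkhoffAverage_smul_mem hv
  have eventually_mem : ∀ᶠ n in atTop,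
      (c n, birkhoffAverage ℝ (c n • T) id n v) ∈ Set.univ ×ˢ s :=
    (eventually_ne_atTop 0).mono fun n hn => ⟨trivial, average_mem (c n) n hn⟩
  obtain ⟨⟨c₀, w⟩, -, N, N_mono, tendsto_pair⟩ :=
    (isCompact_univ.prod s_compact).tendsto_subseq' eventually_mem.frequently
  have tendsto_c : Tendsto (fun k => c (N k)) atTop (𝓝 c₀) := tendsto_pair.fst_nhds
  have tendsto_average := tendsto_pair.snd_nhds
  have fixed : c₀ • T w = w := sub_eq_zero.1 <| tendsto_nhds_unique
    ((tendsto_c.smul ((T.continuous.tendsto w).comp tendsto_average)).sub tendsto_average)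
    ((tendsto_smul_birkhoffAverage_sub hv.isBounded c).comp N_mono.tendsto_atTop)
  exact ⟨w, ⟨c₀⁻¹, eq_inv_smul_iff.2 fixed⟩, N, N_mono, tendsto_average⟩

theorem map_birkhoffAverage_circle_smul (L : E →L[ℂ] F) (T : E →L[ℂ] E) (c : Circle) (n : ℕ)
    (v : E) :
    L (birkhoffAverage ℝ (c • T) id n v) =
      (n : ℝ)⁻¹ • ∑ k ∈ Finset.range n, c ^ k • L (T^[k] v) := by
  rw [map_birkhoffAverage ℝ ℝ L]
  simp only [birkhoffAverage, birkhoffSum, Function.comp_apply, id, circle_smul_iterate_apply,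
    L.map_smul_of_tower]

theorem exists_norm_map_le_mul_norm_map_birkhoffAverage {T : E →L[ℂ] E} (hT : Isometry T) {v : E}
    (hv : TotallyBounded (Set.range fun n : ℕ => T^[n] v)) (L : E →L[ℂ] F) :
    ∃ C : ℝ, ∀ N : ℕ, N ≠ 0 →
      ∃ c : Circle, ‖L v‖ ≤ C * ‖L (birkhoffAverage ℝ (c • T) id N v)‖ := by
  rcases eq_or_ne (L v) 0 with hLv | hLv
  · exact ⟨0, fun _ _ => ⟨1, by simp [hLv]⟩⟩
  obtain ⟨ε, ε_pos, hε⟩ := Metric.continuousAt_iff.1 L.continuous.continuousAt _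
    (half_pos (norm_pos_iff.2 hLv))
  obtain ⟨C, hC⟩ := exists_forall_le_mul_card_return_times hT hv (half_pos ε_pos)
  refine ⟨4 * C, fun N hN => ?_⟩
  let A : Finset ℕ := {m ∈ Finset.range ((N + 1) / 2) | dist (T^[m] v) v < ε / 2}
  have mem_A {m : ℕ} : m ∈ A ↔ m < (N + 1) / 2 ∧ dist (T^[m] v) v < ε / 2 := by simp [A]
  have N_le : (N : ℝ) ≤ 2 * (C * A.card) := by
    have : (N + 1) / 2 ≤ C * A.card := hC _
    exact_mod_cast (by omega : N ≤ 2 * (C * A.card))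
  obtain ⟨c, hc⟩ := exists_circle_card_mul_norm_sub_le (A := A) (N := N) (y := L v)
    (r := ‖L v‖ / 2) (b := fun n => L (T^[n] v))
    (fun m hm l hl => by have := (mem_A.1 hm).1; have := (mem_A.1 hl).1; omega)
    (fun m hm l hl => by
      rw [← dist_eq_norm]
      refine (hε ((dist_iterate_add_le hT m l v).trans_lt ?_)).le
      linarith [(mem_A.1 hm).2, (mem_A.1 hl).2])
  refine ⟨c, le_of_mul_le_mul_left ?_ (Nat.cast_pos.2 hN.bot_lt : (0 : ℝ) < N)⟩
  calc N * ‖L v‖ ≤ 2 * (C * A.card) * ‖L v‖ := by gcongr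
    _ = 4 * C * (A.card * (‖L v‖ - ‖L v‖ / 2)) := by ring
    _ ≤ 4 * C * ‖∑ n ∈ Finset.range N, c ^ n • L (T^[n] v)‖ := by gcongr
    _ = N * (4 * C * ‖L (birkhoffAverage ℝ (c • T) id N v)‖) := by
      rw [map_birkhoffAverage_circle_smul, norm_smul, norm_inv, Real.norm_natCast]
      field_simp

theorem map_eq_zero_of_forall_unimodularEigenvectors [CompleteSpace E] {T : E →L[ℂ] E}
    (hT : Isometry T) {v : E} (hv : TotallyBounded (Set.range fun n : ℕ => T^[n] v))
    {L : E →L[ℂ] F} (hL : ∀ w ∈ unimodularEigenvectors T, L w = 0) : L v = 0 := by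
  obtain ⟨C, hC⟩ := exists_norm_map_le_mul_norm_map_birkhoffAverage hT hv L
  choose! c hc using hC
  obtain ⟨w, hw, N, N_mono, tendsto_average⟩ := exists_tendsto_birkhoffAverage_smul hv c
  have norm_le : ‖L v‖ ≤ C * ‖L w‖ :=
    ge_of_tendsto ((((L.continuous.tendsto w).comp tendsto_average).norm).const_mul C)
      ((N_mono.tendsto_atTop.eventually_ne_atTop 0).mono fun k hk => hc (N k) hk)
  simpa [hL w hw] using norm_le

theorem dense_span_unimodularEigenvectors [CompleteSpace E] {T : E →L[ℂ] E} (hT : Isometry T)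
    (h : ∀ v, TotallyBounded (Set.range fun n : ℕ => T^[n] v)) :
    Dense (Submodule.span ℂ (unimodularEigenvectors T) : Set E) := by
  let S := (Submodule.span ℂ (unimodularEigenvectors T)).topologicalClosure
  have : IsClosed (S : Set E) := Submodule.isClosed_topologicalClosure _
  intro v
  have mkQL_eq_zero : S.mkQL v = 0 :=
    map_eq_zero_of_forall_unimodularEigenvectors hT (h v) fun w hw =>
      (Submodule.Quotient.mk_eq_zero S).2
        (Submodule.le_topologicalClosure _ (Submodule.subset_span hw))
  exact (Submodule.Quotient.mk_eq_zero S).1 mkQL_eq_zero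

end UnimodularEigenvectors

theorem isometry_compCLM {X Y V 𝕜 : Type*} [TopologicalSpace X] [CompactSpace X]
    [TopologicalSpace Y] [CompactSpace Y] [NormedField 𝕜] [SeminormedAddCommGroup V]
    [NormedSpace 𝕜 V] {f : C(X, Y)} (hf : Function.Surjective f) : Isometry (f.compCLM 𝕜 V) :=
  Isometry.of_dist_eq fun g h => by
    simp only [ContinuousMap.dist_eq_iSup, ContinuousMap.compCLM_apply, ContinuousMap.comp_apply]
    exact hf.iSup_comp (g := fun y => dist (g y) (h y))

theorem compCLM_iterate_apply {X V 𝕜 : Type*} [TopologicalSpace X] [NormedField 𝕜]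
    [SeminormedAddCommGroup V] [NormedSpace 𝕜 V] (f : C(X, X)) (n : ℕ) (g : C(X, V)) :
    ⇑((f.compCLM 𝕜 V)^[n] g) = g ∘ f^[n] := by
  induction n with
  | zero => rfl
  | succ n ih =>
    rw [Function.iterate_succ_apply', ContinuousMap.compCLM_apply, ContinuousMap.coe_comp, ih,
      Function.iterate_succ, Function.comp_assoc]

theorem totallyBounded_range_of_equicontinuous {ι X Y : Type*} [TopologicalSpace X]
    [CompactSpace X] [MetricSpace Y] {F : ι → C(X, Y)} {s : Set Y} (hs : IsCompact s)
    (hF : ∀ i x, F i x ∈ s) (h : Equicontinuous fun i => ⇑(F i)) :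
    TotallyBounded (Set.range F) := by
  let e := ContinuousMap.isometryEquivBoundedOfCompact X Y
  rw [← totallyBounded_image_iff e.isometry.isUniformInducing, ← Set.range_comp]
  refine (BoundedContinuousFunction.arzela_ascoli s hs _ ?_ ?_).totallyBounded.subset
    subset_closure
  · rintro - x ⟨i, rfl⟩
    exact hF i x
  · intro x U hU
    filter_upwards [h x U hU] with y hy
    rintro ⟨-, i, rfl⟩
    exact hy i

theorem uniformEquicontinuous_comp_left {ι X Y Z : Type*} [UniformSpace X]
    [UniformSpace Y] [UniformSpace Z] {g : Y → Z} (hg : UniformContinuous g) {F : ι → X → Y}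
    (hF : UniformEquicontinuous F) : UniformEquicontinuous fun i => g ∘ F i :=
  fun _ hU => hF _ (hg hU)

theorem uniformEquicontinuous_pi {ι κ X : Type*} {Y : κ → Type*} [UniformSpace X]
    [∀ k, UniformSpace (Y k)] {F : ι → X → ∀ k, Y k}
    (h : ∀ k, UniformEquicontinuous fun i x => F i x k) : UniformEquicontinuous F :=
  uniformEquicontinuous_iInf_rng.2 fun k =>
    letI : UniformSpace (∀ k, Y k) := UniformSpace.comap (Function.eval k) inferInstance
    (IsUniformInducing.mk (f := Function.eval k) rfl).uniformEquicontinuous_iff.2 (h k)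

theorem isUniformInducing_of_continuous_of_injective {X Y : Type*} [UniformSpace X]
    [CompactSpace X] [UniformSpace Y] [T2Space Y] {f : X → Y} (hf : Continuous f)
    (hf' : Function.Injective f) : IsUniformInducing f :=
  isUniformInducing_iff_uniformSpace.2 <| unique_uniformity_of_compact
    (hf.isClosedEmbedding hf').isInducing.eq_induced.symm rfl

theorem injective_eval_of_dense_span {X : Type*} [TopologicalSpace X] [T35Space X] {S : Set C(X, ℂ)}
    (hS : Dense (Submodule.span ℂ S : Set C(X, ℂ))) :
    Function.Injective fun (x : X) (f : S) => (f : C(X, ℂ)) x := by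
  intro x y hxy
  have eval_eq : ContinuousMap.evalCLM (M := ℂ) ℂ x = ContinuousMap.evalCLM ℂ y :=
    ContinuousLinearMap.ext_on hS fun f hf => congrFun hxy ⟨f, hf⟩
  by_contra hne
  obtain ⟨f, hf, hfxy⟩ := separatesPoints_continuous_of_t35Space (X := X) hne
  exact hfxy (Complex.ofReal_injective
    (DFunLike.congr_fun eval_eq ⟨fun z => f z, Complex.continuous_ofReal.comp hf⟩))

theorem surjective_of_forall_mapClusterPt_iterate {X : Type*} [TopologicalSpace X] {φ : X → X}
    (hφ : IsClosed (Set.range φ)) (h : ∀ x, MapClusterPt x atTop fun n : ℕ => φ^[n] x) :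
    Function.Surjective φ := fun x => by
  refine hφ.closure_subset (mem_closure_iff_nhds.2 fun s hs => ?_)
  obtain ⟨n, return_mem, n_pos⟩ := ((mapClusterPt_iff_frequently.1 (h x) s hs).and_eventually
    (eventually_gt_atTop 0)).exists
  obtain ⟨k, rfl⟩ := Nat.exists_eq_succ_of_ne_zero n_pos.ne'
  exact ⟨φ^[k + 1] x, return_mem, φ^[k] x, (Function.iterate_succ_apply' φ k x).symm⟩

/-- The eigenfunctions of the Koopman operator of `φ` with unimodular eigenvalue, including the zero
function. As only the values of `f ∘ φ` matter, `φ` need not be continuous. -/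
def unimodularEigenfunctions {K : Type*} [TopologicalSpace K] (φ : K → K) : Set C(K, ℂ) :=
  {f | ∃ c : Circle, ∀ x, f (φ x) = c • f x}

/-- The joint evaluation of all eigenfunctions, the candidate embedding of `K` into a power of `ℂ`
that turns `φ` into a rotation. -/
noncomputable def eigenfunctionEval {K : Type*} [TopologicalSpace K] (φ : K → K) (x : K) :
    unimodularEigenfunctions φ → ℂ :=
  fun f => (f : C(K, ℂ)) x

section Eigenfunctions

variable {K : Type*} [TopologicalSpace K] {φ : K → K}

theorem discreteSpectrum_iff_dense_span : DiscreteSpectrum φ ↔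
    Dense (Submodule.span ℂ (unimodularEigenfunctions φ) : Set C(K, ℂ)) := by
  have eigenvectors_eq :
      {f : C(K, ℂ) | f ≠ 0 ∧ ∃ lam : ℂ, ‖lam‖ = 1 ∧ ∀ x, f (φ x) = lam * f x} =
        unimodularEigenfunctions φ \ {0} := by
    ext f
    exact ⟨fun ⟨hf, lam, hlam, h⟩ => ⟨⟨⟨lam, mem_sphere_zero_iff_norm.2 hlam⟩, h⟩, hf⟩,
      fun ⟨⟨c, h⟩, hf⟩ => ⟨hf, c, c.norm_coe, h⟩⟩
  rw [DiscreteSpectrum, eigenvectors_eq, Submodule.span_sdiff_singleton_zero]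

theorem eigenfunctionEval_injective [T35Space K] (h : DiscreteSpectrum φ) :
    Function.Injective (eigenfunctionEval φ) :=
  injective_eval_of_dense_span (discreteSpectrum_iff_dense_span.1 h)

theorem continuous_eigenfunctionEval : Continuous (eigenfunctionEval φ) :=
  continuous_pi fun f => (f : C(K, ℂ)).continuous

theorem exists_eigenfunctionEval_iterate : ∃ c : unimodularEigenfunctions φ → Circle,
    ∀ (n : ℕ) (x : K), eigenfunctionEval φ (φ^[n] x) = c ^ n • eigenfunctionEval φ x := by
  choose c hc using fun f : unimodularEigenfunctions φ => f.2
  refine ⟨c, fun n x => ?_⟩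
  induction n with
  | zero => simp
  | succ n ih =>
    rw [Function.iterate_succ_apply', pow_succ', mul_smul, ← ih]
    exact funext fun f => hc f _

theorem injective_of_injective_eigenfunctionEval (h : Function.Injective (eigenfunctionEval φ)) :
    Function.Injective φ := by
  obtain ⟨c, hc⟩ := exists_eigenfunctionEval_iterate (φ := φ)
  intro x y hxy
  refine h (smul_left_cancel (c ^ 1) ?_)
  rw [← hc, ← hc, Function.iterate_one, hxy]

theorem mapClusterPt_iterate_of_isInducing (h : IsInducing (eigenfunctionEval φ)) (x : K) :
    MapClusterPt x atTop fun n : ℕ => φ^[n] x := by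
  obtain ⟨c, hc⟩ := exists_eigenfunctionEval_iterate (φ := φ)
  have continuous_smul_eval : Continuous fun a : unimodularEigenfunctions φ → Circle =>
      a • eigenfunctionEval φ x :=
    continuous_pi fun f => (continuous_apply f).smul continuous_const
  refine h.mapClusterPt_iff.1 (mapClusterPt_comp.1 ?_)
  simpa [Function.comp_def, hc] using
    (mapClusterPt_one_atTop_pow c).continuousAt_comp continuous_smul_eval.continuousAt

end Eigenfunctions

theorem uniformEquicontinuous_circle_smul :
    UniformEquicontinuous fun (c : Circle) (z : ℂ) => c • z :=
  LipschitzWith.uniformEquicontinuous _ 1 fun c => LipschitzWith.of_dist_le_mul fun z w => by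
    rw [dist_eq_norm, ← smul_sub, Circle.norm_smul, dist_eq_norm, NNReal.coe_one, one_mul]

theorem uniformEquicontinuous_iterate_of_isUniformInducing {K : Type*} [UniformSpace K]
    [CompactSpace K] {φ : K → K} (h : IsUniformInducing (eigenfunctionEval φ)) :
    UniformEquicontinuous fun n : ℕ => φ^[n] := by
  obtain ⟨c, hc⟩ := exists_eigenfunctionEval_iterate (φ := φ)
  refine h.uniformEquicontinuous_iff.2 (uniformEquicontinuous_pi fun f => ?_)
  have eval_iterate (n : ℕ) (x : K) : eigenfunctionEval φ (φ^[n] x) f = c f ^ n • f.1 x :=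
    congrFun (hc n x) f
  simp only [Function.comp_apply, eval_iterate]
  exact fun U hU => (CompactSpace.uniformContinuous_of_continuous f.1.continuous).eventually
    ((uniformEquicontinuous_circle_smul.comp fun n : ℕ => c f ^ n) U hU)

theorem discreteSpectrum_of_uniformEquicontinuous {K : Type*} [UniformSpace K] [CompactSpace K]
    {φ : K → K} (φ_surjective : Function.Surjective φ)
    (φ_equicontinuous : UniformEquicontinuous fun n : ℕ => φ^[n]) : DiscreteSpectrum φ := by
  have φ_continuous : Continuous φ := (φ_equicontinuous.uniformContinuous 1).continuous
  let T : C(K, ℂ) →L[ℂ] C(K, ℂ) := ContinuousMap.compCLM ℂ ℂ ⟨φ, φ_continuous⟩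
  have T_iterate (n : ℕ) (f : C(K, ℂ)) : ⇑(T^[n] f) = f ∘ φ^[n] :=
    compCLM_iterate_apply ⟨φ, φ_continuous⟩ n f
  have eigenfunctions_eq : unimodularEigenfunctions φ = unimodularEigenvectors T := by
    ext f
    exact exists_congr fun c => (ContinuousMap.ext_iff (f := T f) (g := c • f)).symm
  rw [discreteSpectrum_iff_dense_span, eigenfunctions_eq]
  refine dense_span_unimodularEigenvectors (isometry_compCLM φ_surjective) fun f => ?_
  refine totallyBounded_range_of_equicontinuous (isCompact_range f.continuous) (fun n x => ?_) ?_
  · exact ⟨φ^[n] x, (congrFun (T_iterate n f) x).symm⟩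
  · simp only [T_iterate]
    exact (uniformEquicontinuous_comp_left
      (CompactSpace.uniformContinuous_of_continuous f.continuous) φ_equicontinuous).equicontinuous

theorem discreteSpectrum_iff_equicontinuous_and_invertible_general
    {K : Type*} [UniformSpace K] [CompactSpace K] [T2Space K] (φ : K → K) :
    DiscreteSpectrum φ ↔
      Function.Bijective φ ∧ UniformEquicontinuous fun n : ℕ => φ^[n] := by
  refine ⟨fun h => ?_, fun h => discreteSpectrum_of_uniformEquicontinuous h.1.surjective h.2⟩
  have eval_injective : Function.Injective (eigenfunctionEval φ) := eigenfunctionEval_injective h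
  have eval_inducing : IsUniformInducing (eigenfunctionEval φ) :=
    isUniformInducing_of_continuous_of_injective continuous_eigenfunctionEval eval_injective
  have φ_equicontinuous := uniformEquicontinuous_iterate_of_isUniformInducing eval_inducing
  have φ_continuous : Continuous φ := (φ_equicontinuous.uniformContinuous 1).continuous
  have φ_surjective : Function.Surjective φ := surjective_of_forall_mapClusterPt_iterate
    (isCompact_range φ_continuous).isClosed
    (mapClusterPt_iterate_of_isInducing eval_inducing.isInducing)
  exact ⟨⟨injective_of_injective_eigenfunctionEval eval_injective, φ_surjective⟩, φ_equicontinuous⟩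

/-- Let `(K, φ)` be a topological dynamical system (with `K` carrying its
unique compatible uniformity as a compact Hausdorff space).  Then the Koopman operator `T_φ`
has discrete spectrum on `C(K)` if and only if `φ` is bijective and the family
`{φ^n : n ∈ ℕ}` is uniformly equicontinuous. -/
theorem discreteSpectrum_iff_equicontinuous_and_invertible
    {K : Type*} [UniformSpace K] [CompactSpace K] [T2Space K]
    (φ : K → K) (hφ : Continuous φ) :
    DiscreteSpectrum φ ↔
      Function.Bijective φ ∧ UniformEquicontinuous fun n : ℕ => φ^[n] :=
  discreteSpectrum_iff_equicontinuous_and_invertible_general φ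
end
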